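/- The function h attains its maximum over the box [−π/2, π/2]⁴ and this maximum equals (3/28)·√(3/2); moreover the maximum is attained at λ₁ = −π/4 and λ₂ = λ₃ = λ₄ = (1/2)·arcsin((√6 − 2)/2). -/

import Mathlib

open Real

/-- `f(λ) = 1/2 − (1/2)·sin(2λ)`. -/
noncomputable def ff (l : ℝ) : ℝ := 1 / 2 - (1 / 2) * sin (2 * l)

/-- The function `h(λ₁,λ₂,λ₃,λ₄) = (1/7)(f₁g₁ + f₂g₂ + f₃g₃ + f₄g₄ − f₁f₂f₃f₄)`. -/
noncomputable def hh (l1 l2 l3 l4 : ℝ) : ℝ :=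
  (1 / 7) *
    (ff l1 * (cos l2 ^ 2 * cos l3 ^ 2 * cos l4 ^ 2 + sin l2 ^ 2 * sin l3 ^ 2 * sin l4 ^ 2) +
     ff l2 * (sin l1 ^ 2 * sin l3 ^ 2 * cos l4 ^ 2 + cos l1 ^ 2 * cos l3 ^ 2 * sin l4 ^ 2) +
     ff l3 * (sin l1 ^ 2 * sin l4 ^ 2 * cos l2 ^ 2 + cos l1 ^ 2 * cos l4 ^ 2 * sin l2 ^ 2) +
     ff l4 * (sin l1 ^ 2 * sin l2 ^ 2 * cos l3 ^ 2 + cos l1 ^ 2 * cos l2 ^ 2 * sin l3 ^ 2) -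
     ff l1 * ff l2 * ff l3 * ff l4)

/-!
In the variables `yᵢ = 1 - sin 2λᵢ` and `cᵢ = cos 2λᵢ`, which satisfy `cᵢ² = yᵢ(2 - yᵢ)`, the
function `56 h` is a polynomial that is linear in the `yᵢ` up to the term `-y₁y₂y₃y₄/2`, quadratic
in the `cᵢ`, and invariant under permuting the indices up to sign changes of the `cᵢ`. One may
therefore assume `y₁ ≥ y₂ ≥ y₃ ≥ y₄`, and then the products `cᵢcⱼ` can be bounded by squares with
equality at the maximizer. After `c₁² ≤ 2(2 - y₁)`, the result is affine in `y₁ ∈ [y₂, 2]`. At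
`y₁ = y₂` it is at most `7.3 < 3√6`, and at `y₁ = 2` it is a symmetric polynomial in `y₂, y₃, y₄`
which Schur's inequality reduces to the diagonal `y₂ = y₃ = y₄`, where the sharp bound `3√6` is
attained at the double root `2 - √6/2`.
-/

section General

theorem forall_of_antitone_of_adjacent_swap {α : Type*} [LinearOrder α] {n : ℕ}
    {P : (Fin (n + 1) → α) → Prop}
    (swap : ∀ y (i : Fin n), P (y ∘ Equiv.swap i.castSucc i.succ) → P y)
    (antitone : ∀ y, Antitone y → P y) (y : Fin (n + 1) → α) : P y := by
  have of_comp (σ : Equiv.Perm (Fin (n + 1))) : ∀ y, P (y ∘ σ) → P y := by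
    have hσ : σ ∈ Submonoid.closure
        (Set.range fun i : Fin n ↦ Equiv.swap i.castSucc i.succ) := by
      rw [Equiv.Perm.mclosure_swap_castSucc_succ]
      exact Submonoid.mem_top σ
    induction hσ using Submonoid.closure_induction with
    | mem σ hσ =>
      obtain ⟨i, rfl⟩ := hσ
      exact fun y ↦ swap y i
    | one => exact fun _ h ↦ h
    | mul σ τ _ _ ihσ ihτ => exact fun y h ↦ ihσ y (ihτ (y ∘ σ) h)
  exact of_comp (Tuple.sort (OrderDual.toDual ∘ y)) y
    (antitone _ (Tuple.monotone_sort (OrderDual.toDual ∘ y)))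

variable {R : Type*} [CommRing R] [LinearOrder R] [IsStrictOrderedRing R]

theorem add_mul_le_of_mem_Icc {A B M a b x : R} (hx : x ∈ Set.Icc a b)
    (ha : A + B * a ≤ M) (hb : A + B * b ≤ M) : A + B * x ≤ M := by
  rcases le_total 0 B with hB | hB
  · exact (add_le_add_right (mul_le_mul_of_nonneg_left hx.2 hB) A).trans hb
  · exact (add_le_add_right (mul_le_mul_of_nonpos_left hx.1 hB) A).trans ha

theorem schur_nonneg_of_le {x y z : R} (hz : 0 ≤ z) (hzy : z ≤ y) (hyx : y ≤ x) :
    0 ≤ x * (x - y) * (x - z) + y * (y - x) * (y - z) + z * (z - x) * (z - y) := by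
  have hy : 0 ≤ x + y - z := by linarith
  have hzx : 0 ≤ (x - z) * (y - z) :=
    mul_nonneg (sub_nonneg.2 (hzy.trans hyx)) (sub_nonneg.2 hzy)
  calc
    0 ≤ (x - y) ^ 2 * (x + y - z) + z * ((x - z) * (y - z)) := by positivity
    _ = _ := by ring

theorem schur_nonneg {x y z : R} (hx : 0 ≤ x) (hy : 0 ≤ y) (hz : 0 ≤ z) :
    0 ≤ x * (x - y) * (x - z) + y * (y - x) * (y - z) + z * (z - x) * (z - y) := by
  wlog hyx : y ≤ x generalizing x y
  · linarith [this hy hx (le_of_not_ge hyx)]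
  rcases le_total z y with hzy | hyz
  · exact schur_nonneg_of_le hz hzy hyx
  rcases le_total z x with hzx | hxz
  · linarith [schur_nonneg_of_le hy hyz hzx]
  · linarith [schur_nonneg_of_le hy hyx hxz]

end General

/-- The function `56 h` as a polynomial in `yᵢ = 1 - sin 2λᵢ` and `cᵢ = cos 2λᵢ`, in which the
symmetries of `h` become visible. The indices `1, …, 4` of `h` are shifted to `0, …, 3`. -/
noncomputable def doubleAngleForm (y c : Fin 4 → ℝ) : ℝ :=
  y 0 + y 1 + y 2 + y 3 +
    c 1 * c 2 * (y 0 - y 3) + c 1 * c 3 * (y 0 - y 2) + c 2 * c 3 * (y 0 - y 1) +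
    c 0 * c 2 * (y 1 - y 3) + c 0 * c 3 * (y 2 - y 1) + c 0 * c 1 * (y 3 - y 2) -
    y 0 * y 1 * y 2 * y 3 / 2

theorem hh_eq_doubleAngleForm (l1 l2 l3 l4 : ℝ) :
    hh l1 l2 l3 l4 = doubleAngleForm (fun i ↦ 1 - sin (2 * ![l1, l2, l3, l4] i))
      (fun i ↦ cos (2 * ![l1, l2, l3, l4] i)) / 56 := by
  simp only [hh, ff, doubleAngleForm, sin_sq, cos_sq, Matrix.cons_val]
  ring

theorem exists_doubleAngleForm_comp_swap (i : Fin 3) (y c : Fin 4 → ℝ) :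
    ∃ c' : Fin 4 → ℝ, (∀ j, c' j ^ 2 = c (Equiv.swap i.castSucc i.succ j) ^ 2) ∧
      doubleAngleForm (y ∘ Equiv.swap i.castSucc i.succ) c' = doubleAngleForm y c := by
  refine ⟨![![c 1, c 0, c 2, -c 3], ![-c 0, c 2, c 1, c 3], ![-c 0, c 1, c 3, c 2]] i,
    fun j ↦ ?_, ?_⟩
  · fin_cases i <;> fin_cases j <;> simp [Equiv.swap_apply_def]
  · fin_cases i <;>
      simp only [doubleAngleForm, Function.comp_apply, Equiv.swap_apply_def, Fin.reduceFinMk,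
        Fin.reduceCastSucc, Fin.reduceSucc, Fin.reduceEq, ↓reduceIte, Matrix.cons_val] <;>
      ring

theorem doubleAngleForm_le_of_antitone {y : Fin 4 → ℝ} (hy : Antitone y) (c : Fin 4 → ℝ) :
    doubleAngleForm y c ≤ y 0 + y 1 + y 2 + y 3 +
      (y 0 - y 1) * (c 1 ^ 2 + c 2 ^ 2 + c 3 ^ 2) +
      (y 1 - y 2) * (c 0 ^ 2 + c 1 ^ 2 + (c 2 ^ 2 + c 3 ^ 2) / 2) +
      (y 2 - y 3) * ((c 0 ^ 2 + c 1 ^ 2 + c 2 ^ 2) / 2) - y 0 * y 1 * y 2 * y 3 / 2 := by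
  have h01 : 0 ≤ y 0 - y 1 := sub_nonneg.2 (hy (by decide))
  have h12 : 0 ≤ y 1 - y 2 := sub_nonneg.2 (hy (by decide))
  have h23 : 0 ≤ y 2 - y 3 := sub_nonneg.2 (hy (by decide))
  have form₀ : c 1 * c 2 + c 1 * c 3 + c 2 * c 3 ≤ c 1 ^ 2 + c 2 ^ 2 + c 3 ^ 2 := by
    linarith [two_mul_le_add_sq (c 1) (c 2), two_mul_le_add_sq (c 1) (c 3),
      two_mul_le_add_sq (c 2) (c 3)]
  have form₁ : (c 0 + c 1) * c 2 + (c 1 - c 0) * c 3 ≤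
      c 0 ^ 2 + c 1 ^ 2 + (c 2 ^ 2 + c 3 ^ 2) / 2 := by
    linarith [two_mul_le_add_sq (c 0 + c 1) (c 2), two_mul_le_add_sq (c 1 - c 0) (c 3)]
  have form₂ : (c 0 + c 1) * c 2 - c 0 * c 1 ≤ (c 0 ^ 2 + c 1 ^ 2 + c 2 ^ 2) / 2 := by
    linarith [two_mul_le_add_sq (c 0 + c 1) (c 2)]
  calc
    doubleAngleForm y c = y 0 + y 1 + y 2 + y 3 +
        (y 0 - y 1) * (c 1 * c 2 + c 1 * c 3 + c 2 * c 3) +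
        (y 1 - y 2) * ((c 0 + c 1) * c 2 + (c 1 - c 0) * c 3) +
        (y 2 - y 3) * ((c 0 + c 1) * c 2 - c 0 * c 1) - y 0 * y 1 * y 2 * y 3 / 2 := by
      rw [doubleAngleForm]
      ring
    _ ≤ _ := by
      linarith [mul_le_mul_of_nonneg_left form₀ h01, mul_le_mul_of_nonneg_left form₁ h12,
        mul_le_mul_of_nonneg_left form₂ h23]

theorem three_mul_sqrt_six_sub_cubic (y : ℝ) :
    3 * √6 - (2 + 15 * y - 12 * y ^ 2 + 2 * y ^ 3) =
      2 * (y - (2 - √6 / 2)) ^ 2 * (2 - y + √6) := by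
  linear_combination (3 - 3 / 2 * y - √6 / 2) * sq_sqrt (show (0 : ℝ) ≤ 6 by norm_num)

theorem cubic_le_three_mul_sqrt_six {y : ℝ} (hy : y ≤ 2) :
    2 + 15 * y - 12 * y ^ 2 + 2 * y ^ 3 ≤ 3 * √6 := by
  rw [← sub_nonneg, three_mul_sqrt_six_sub_cubic]
  exact mul_nonneg (by positivity) (add_nonneg (sub_nonneg.2 hy) (sqrt_nonneg 6))

theorem seven_point_three_le_three_mul_sqrt_six : 7.3 ≤ 3 * √6 := by
  have : 2.44 ≤ √6 := le_sqrt_of_sq_le (by norm_num)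
  linarith

/- `p`, `q`, `r` stand for the elementary symmetric functions of three numbers in `[0, 2]`. The
threshold `36/11` is where Schur's bound on `r` makes the coefficient of `q` change sign; above it
the worst case is `q = p ^ 2 / 4`, where Schur's bound coincides with `0 ≤ r`. -/
theorem pqr_poly_le_three_mul_sqrt_six {p q r : ℝ} (hp : p ∈ Set.Icc 0 6) (hq : 3 * q ≤ p ^ 2)
    (hr : 0 ≤ r) (schur : 0 ≤ p ^ 3 - 4 * p * q + 9 * r) :
    2 + 5 * p - 2 * p ^ 2 + 2 * q + p * q / 2 - 5 / 2 * r ≤ 3 * √6 := by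
  obtain ⟨hp₀, hp₆⟩ := hp
  rcases le_total p (36 / 11) with h | h
  · calc
      _ ≤ 2 + 5 * p - 2 * p ^ 2 + 5 / 18 * p ^ 3 + 11 / 18 * (36 / 11 - p) * q := by linarith
      _ ≤ 2 + 5 * p - 2 * p ^ 2 + 5 / 18 * p ^ 3 + 11 / 18 * (36 / 11 - p) * (p ^ 2 / 3) := by
        gcongr
        linarith
      _ = 2 + 15 * (p / 3) - 12 * (p / 3) ^ 2 + 2 * (p / 3) ^ 3 := by ring
      _ ≤ 3 * √6 := cubic_le_three_mul_sqrt_six (by linarith)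
  · have cubic_le : 2 + 5 * p - 3 / 2 * p ^ 2 + p ^ 3 / 8 ≤ 7.3 := by
      linarith [mul_nonneg (mul_nonneg (sub_nonneg.2 h) (sub_nonneg.2 hp₆)) hp₀,
        sq_nonneg (p - 3.73)]
    refine le_trans ?_ (cubic_le.trans seven_point_three_le_three_mul_sqrt_six)
    rcases le_total q (p ^ 2 / 4) with hq' | hq'
    · linarith [mul_nonneg (sub_nonneg.2 hq') hp₀]
    · linarith [mul_nonneg (sub_nonneg.2 hq') (sub_nonneg.2 h)]

theorem symmetric_poly_le_three_mul_sqrt_six {x y z : ℝ} (hx : x ∈ Set.Icc 0 2)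
    (hy : y ∈ Set.Icc 0 2) (hz : z ∈ Set.Icc 0 2) :
    2 + 5 * (x + y + z) - 2 * (x + y + z) ^ 2 + 2 * (x * y + y * z + z * x) +
      (x + y + z) * (x * y + y * z + z * x) / 2 - 5 / 2 * (x * y * z) ≤ 3 * √6 := by
  obtain ⟨hx₀, hx₂⟩ := hx
  obtain ⟨hy₀, hy₂⟩ := hy
  obtain ⟨hz₀, hz₂⟩ := hz
  refine pqr_poly_le_three_mul_sqrt_six ⟨by positivity, by linarith⟩ ?_ (by positivity) ?_
  · linarith [sq_nonneg (x - y), sq_nonneg (y - z), sq_nonneg (z - x)]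
  · linarith [schur_nonneg hx₀ hy₀ hz₀]

theorem biaffine_poly_le_of_mem_Icc {t y z : ℝ} (hy : y ∈ Set.Icc 0 t) (hz : z ∈ Set.Icc 0 t) :
    2 * t + (y + z) - t ^ 2 * y * z / 2 + (t - (y + z) / 2) * (5 - t ^ 2) ≤ 7.3 := by
  have ht : 0 ≤ t := hy.1.trans hy.2
  -- The squares below are centred near the maximizers of the three polynomials in `t`.
  have corner_zero_zero : 7 * t - t ^ 3 ≤ 7.3 := by
    linarith [mul_nonneg ht (sq_nonneg (t - 1.53)), sq_nonneg (t - 1.53)]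
  have corner_t_zero : 11 / 2 * t - t ^ 3 / 2 ≤ 7.3 := by
    linarith [mul_nonneg ht (sq_nonneg (t - 1.92)), sq_nonneg (t - 1.92)]
  have corner_t_t : 4 * t - t ^ 4 / 2 ≤ 7.3 := by
    linarith [sq_nonneg (t ^ 2 - 1.6), sq_nonneg (t - 1.26)]
  have edge_zero : 7 * t - t ^ 3 + (t ^ 2 - 3) / 2 * z ≤ 7.3 :=
    add_mul_le_of_mem_Icc hz (by linarith) (by linarith)
  have edge_t : 11 / 2 * t - t ^ 3 / 2 + (t ^ 2 - 3 - t ^ 3) / 2 * z ≤ 7.3 :=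
    add_mul_le_of_mem_Icc hz (by linarith) (by linarith)
  have := add_mul_le_of_mem_Icc (M := 7.3) (A := 7 * t - t ^ 3 + (t ^ 2 - 3) / 2 * z)
    (B := (t ^ 2 - 3) / 2 - t ^ 2 * z / 2) hy (by linarith) (by linarith)
  linarith

theorem mul_two_sub_le_one (y : ℝ) : y * (2 - y) ≤ 1 := by
  linarith [sq_nonneg (y - 1)]

theorem sorted_poly_left_endpoint_le {t y z : ℝ} (hz : 0 ≤ z) (hzy : z ≤ y) (hyt : y ≤ t) :
    2 * t + (y + z) - t ^ 2 * y * z / 2 + (t - (y + z) / 2) * (4 - t ^ 2) +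
      (t - z) / 2 * (y * (2 - y)) + (t - y) / 2 * (z * (2 - z)) ≤ 7.3 := by
  have hzt : z ≤ t := hzy.trans hyt
  have hy := mul_le_mul_of_nonneg_left (mul_two_sub_le_one y) (sub_nonneg.2 hzt)
  have hz' := mul_le_mul_of_nonneg_left (mul_two_sub_le_one z) (sub_nonneg.2 hyt)
  have := biaffine_poly_le_of_mem_Icc ⟨hz.trans hzy, hyt⟩ ⟨hz, hzt⟩
  linarith

theorem sorted_poly_le_three_mul_sqrt_six {x t y z : ℝ} (hx : x ≤ 2) (htx : t ≤ x) (hyt : y ≤ t)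
    (hzy : z ≤ y) (hz : 0 ≤ z) :
    x + t + y + z + (x - t) * (t * (2 - t) + y * (2 - y) + z * (2 - z)) +
      (t - y) * (x * (2 - x) + t * (2 - t) + (y * (2 - y) + z * (2 - z)) / 2) +
      (y - z) * ((x * (2 - x) + t * (2 - t) + y * (2 - y)) / 2) - x * t * y * z / 2 ≤ 3 * √6 := by
  have hxx : (t - (y + z) / 2) * (x * (2 - x)) ≤ (t - (y + z) / 2) * (2 * (2 - x)) := by
    have ht : 0 ≤ t - (y + z) / 2 := by linarith
    exact mul_le_mul_of_nonneg_left (mul_le_mul_of_nonneg_right hx (sub_nonneg.2 hx)) ht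
  have left := (sorted_poly_left_endpoint_le hz hzy hyt).trans
    seven_point_three_le_three_mul_sqrt_six
  have right : _ ≤ 3 * √6 := symmetric_poly_le_three_mul_sqrt_six (x := t) (y := y) (z := z)
    ⟨by linarith, by linarith⟩ ⟨by linarith, by linarith⟩ ⟨hz, by linarith⟩
  -- With `x * (2 - x)` replaced by `2 * (2 - x)` the left-hand side becomes `A + B * x`.
  have := add_mul_le_of_mem_Icc (M := 3 * √6)
    (A := 5 * t - (y + z) - (y + z) / 2 * (t * (2 - t)) - (t + z) / 2 * (y * (2 - y)) -
      (t + y) / 2 * (z * (2 - z)))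
    (B := 1 - 2 * t + (y + z) + t * (2 - t) + y * (2 - y) + z * (2 - z) - t * y * z / 2)
    ⟨htx, hx⟩ (by linarith) (by linarith)
  linarith

theorem doubleAngleForm_le {y c : Fin 4 → ℝ} (hc : ∀ i, c i ^ 2 = y i * (2 - y i)) :
    doubleAngleForm y c ≤ 3 * √6 := by
  induction y using forall_of_antitone_of_adjacent_swap generalizing c with
  | swap y i ih =>
    obtain ⟨c', hc', h⟩ := exists_doubleAngleForm_comp_swap i y c
    exact h ▸ ih fun j ↦ (hc' j).trans (hc _)
  | antitone y hy =>
    have mem_Icc (i) : y i ∈ Set.Icc 0 2 := by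
      constructor <;> nlinarith [hc i, sq_nonneg (c i)]
    refine (doubleAngleForm_le_of_antitone hy c).trans ?_
    simp only [hc]
    exact sorted_poly_le_three_mul_sqrt_six (mem_Icc 0).2 (hy (by decide)) (hy (by decide))
      (hy (by decide)) (mem_Icc 3).1

theorem sqrt_three_div_two : √(3 / 2) = √6 / 2 := by
  rw [show (3 / 2 : ℝ) = 6 / 2 ^ 2 by norm_num, sqrt_div' _ (sq_nonneg 2), sqrt_sq zero_le_two]

theorem hh_le (l1 l2 l3 l4 : ℝ) : hh l1 l2 l3 l4 ≤ 3 / 28 * √(3 / 2) := by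
  have bound (l : Fin 4 → ℝ) :
      doubleAngleForm (fun i ↦ 1 - sin (2 * l i)) (fun i ↦ cos (2 * l i)) ≤ 3 * √6 :=
    doubleAngleForm_le fun i ↦ by rw [cos_sq']; ring
  rw [hh_eq_doubleAngleForm, sqrt_three_div_two]
  linarith [bound ![l1, l2, l3, l4]]

theorem hh_neg_pi_div_four (l : ℝ) :
    hh (-(π / 4)) l l l = (2 + 15 * (1 - sin (2 * l)) - 12 * (1 - sin (2 * l)) ^ 2 +
      2 * (1 - sin (2 * l)) ^ 3) / 56 := by
  have h : 2 * (π / 4) = π / 2 := by ring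
  simp only [hh_eq_doubleAngleForm, doubleAngleForm, Matrix.cons_val, mul_neg, h, sin_neg,
    sin_pi_div_two, cos_neg, cos_pi_div_two]
  linear_combination (3 / 56 * (1 + sin (2 * l))) * cos_sq' (2 * l)

theorem hh_maximizer :
    hh (-(π / 4)) (1 / 2 * arcsin ((√6 - 2) / 2)) (1 / 2 * arcsin ((√6 - 2) / 2))
      (1 / 2 * arcsin ((√6 - 2) / 2)) = 3 / 28 * √(3 / 2) := by
  have h4 : √6 ≤ 4 := sqrt_le_iff.2 (by norm_num)
  have hsin : sin (2 * (1 / 2 * arcsin ((√6 - 2) / 2))) = (√6 - 2) / 2 := by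
    rw [← mul_assoc, mul_one_div_cancel two_ne_zero, one_mul,
      sin_arcsin (by linarith [sqrt_nonneg 6]) (by linarith)]
  rw [hh_neg_pi_div_four, hsin, sqrt_three_div_two]
  linear_combination -(1 / 56) * three_mul_sqrt_six_sub_cubic (1 - (√6 - 2) / 2)

theorem half_arcsin_mem_Icc (x : ℝ) : 1 / 2 * arcsin x ∈ Set.Icc (-(π / 2)) (π / 2) := by
  obtain ⟨h₁, h₂⟩ := arcsin_mem_Icc x
  constructor <;> linarith [pi_pos]

theorem stmt19_general {S : Set ℝ} (h₁ : -(π / 4) ∈ S)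
    (h₂ : 1 / 2 * arcsin ((√6 - 2) / 2) ∈ S) :
    IsGreatest
      {r : ℝ | ∃ l1 l2 l3 l4 : ℝ, l1 ∈ S ∧ l2 ∈ S ∧ l3 ∈ S ∧ l4 ∈ S ∧ r = hh l1 l2 l3 l4}
      (3 / 28 * √(3 / 2)) ∧
    hh (-(π / 4)) (1 / 2 * arcsin ((√6 - 2) / 2)) (1 / 2 * arcsin ((√6 - 2) / 2))
      (1 / 2 * arcsin ((√6 - 2) / 2)) = 3 / 28 * √(3 / 2) := by
  refine ⟨⟨⟨_, _, _, _, h₁, h₂, h₂, h₂, hh_maximizer.symm⟩, ?_⟩, hh_maximizer⟩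
  rintro _ ⟨l1, l2, l3, l4, -, -, -, -, rfl⟩
  exact hh_le l1 l2 l3 l4

/-- `h` attains its maximum `(3/28)·√(3/2)` over the box `[−π/2, π/2]⁴`, and the
maximum is attained at `λ₁ = −π/4`, `λ₂ = λ₃ = λ₄ = (1/2)·arcsin((√6 − 2)/2)`. -/
theorem stmt19 :
    IsGreatest
      {r : ℝ | ∃ l1 l2 l3 l4 : ℝ,
        l1 ∈ Set.Icc (-(π / 2)) (π / 2) ∧ l2 ∈ Set.Icc (-(π / 2)) (π / 2) ∧
        l3 ∈ Set.Icc (-(π / 2)) (π / 2) ∧ l4 ∈ Set.Icc (-(π / 2)) (π / 2) ∧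
        r = hh l1 l2 l3 l4}
      ((3 / 28) * Real.sqrt (3 / 2)) ∧
    hh (-(π / 4)) ((1 / 2) * arcsin ((Real.sqrt 6 - 2) / 2))
      ((1 / 2) * arcsin ((Real.sqrt 6 - 2) / 2)) ((1 / 2) * arcsin ((Real.sqrt 6 - 2) / 2)) =
      (3 / 28) * Real.sqrt (3 / 2) := by
  exact stmt19_general ⟨by linarith [pi_pos], by linarith [pi_pos]⟩ (half_arcsin_mem_Icc _)
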